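/- arXiv:1306.5478 — 2 statements merged into one kernel-verified Lean document; each statement's English description precedes it below -/
import Mathlib

section
/- Every finite-dimensional simple module over the Lie algebra 𝓛₊ = ⊕_{j≥0} ℂ[x]_{j+1}∂_μ is one-dimensional, and the one-dimensional representations are exactly the maps ρ_α (α ∈ ℂ) given by ρ_α(xᵢ∂_μ) = αμᵢ for i = 1,...,n and ρ_α(𝓛_j) = 0 for j ≥ 1. -/
open MvPolynomial

/-- The derivation `∂_μ = μ₁∂/∂x₁ + ⋯ + μₙ∂/∂xₙ` applied to a polynomial. -/
noncomputable def dmu (n : ℕ) (μ : Fin n → ℂ) (g : MvPolynomial (Fin n) ℂ) :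
    MvPolynomial (Fin n) ℂ :=
  ∑ i, C (μ i) * pderiv i g

/-- The Lie bracket of `𝓛 = ℂ[x₁,…,xₙ]∂_μ`, identified with `ℂ[x₁,…,xₙ]` via
`f ↔ f∂_μ`; the subalgebra `𝓛₊` corresponds to polynomials with zero constant
term. -/
noncomputable def lbr (n : ℕ) (μ : Fin n → ℂ) (f g : MvPolynomial (Fin n) ℂ) :
    MvPolynomial (Fin n) ℂ :=
  f * dmu n μ g - g * dmu n μ f

/-!
Let `D` be a derivation of a commutative algebra `A`, let `I` be an ideal and give `I` the bracket
of `I D`.  The chain `I ⊇ {f ∈ I | D f ∈ I} ⊇ I ^ 2 ⊇ I ^ 3 ⊇ ⋯` shows that every quotient of `I` by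
a power of `I` is solvable.  Suppose that `h ∈ I` satisfies `D h = 1`.  Since
`[h, h ^ (k + 1)] = k h ^ (k + 1)`, a finite-dimensional representation kills `h ^ (k + 1)` for all
large `k`; brackets with `I` then trade factors `h` for arbitrary elements of `I`, so that it kills
a power of `I`.  By Lie's theorem a simple module is therefore one-dimensional.  On it all brackets
vanish, the same trade kills `I ^ 2`, and `[h, f] = h D f - f` shows that `f` acts as the constant
term of `D f` times `h`.
-/

attribute [local instance] LieRing.ofAssociativeRing

lemma isSolvable_of_lie_mem_succ {R L : Type*} [CommRing R] [LieRing L] [LieAlgebra R L]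
    (F : ℕ → Submodule R L) (h_zero : F 0 = ⊤)
    (h_succ : ∀ k, ∀ x ∈ F k, ∀ y ∈ F k, ⁅x, y⁆ ∈ F (k + 1)) {N : ℕ} (hN : F N = ⊥) :
    LieAlgebra.IsSolvable L := by
  have derivedSeries_le : ∀ k, (LieAlgebra.derivedSeries R L k).toSubmodule ≤ F k := by
    intro k
    induction k with
    | zero => simp [h_zero]
    | succ k ih =>
      rw [LieAlgebra.derivedSeries_def, LieAlgebra.derivedSeriesOfIdeal_succ,
        ← LieAlgebra.derivedSeries_def, LieSubmodule.lieIdeal_oper_eq_linear_span',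
        Submodule.span_le]
      rintro _ ⟨x, hx, y, hy, rfl⟩
      exact h_succ k x (ih hx) y (ih hy)
  refine LieAlgebra.IsSolvable.mk (R := R) (k := N) ?_
  rw [← LieSubmodule.toSubmodule_eq_bot, eq_bot_iff, ← hN]
  exact derivedSeries_le N

/-- The Lie bracket of the algebra `A D` of multiples of a derivation `D` of `A`, transported to `A`
along `f ↦ f D`. -/
def wittBracket {R A : Type*} [CommRing R] [CommRing A] [Algebra R A] (D : Derivation R A A)
    (f g : A) : A :=
  f * D g - g * D f

section Ideal

variable {R A : Type*} [CommRing R] [CommRing A] [Algebra R A] {D : Derivation R A A}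
  {I J : Ideal A} {f g h : A}

lemma derivation_mem_pow (hD : ∀ a ∈ I, D a ∈ I) {k : ℕ} (hf : f ∈ I ^ k) : D f ∈ I ^ k := by
  induction k generalizing f with
  | zero => simp
  | succ k ih =>
    rw [pow_succ] at hf ⊢
    refine Submodule.mul_induction_on hf (fun a ha b hb => ?_) fun a b ha hb => ?_
    · rw [D.leibniz, smul_eq_mul, smul_eq_mul, mul_comm b]
      exact add_mem (Ideal.mul_mem_mul ha (hD b hb)) (Ideal.mul_mem_mul (ih ha) hb)
    · rw [map_add]
      exact add_mem ha hb

lemma mul_derivation_mem_pow {k : ℕ} (hf : f ∈ I ^ k) (hg : g ∈ I) : g * D f ∈ I ^ k :=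
  derivation_mem_pow (D := g • D) (fun _ _ => I.mul_mem_right _ hg) hf

lemma derivation_pow_succ (hD : D h = 1) (k : ℕ) : D (h ^ (k + 1)) = (k + 1) * h ^ k := by
  rw [D.leibniz_pow, hD, smul_eq_mul, mul_one, Nat.add_sub_cancel, nsmul_eq_mul, Nat.cast_succ]

lemma mul_derivation_pow (hD : D h = 1) (k : ℕ) : h * D (h ^ k) = k * h ^ k := by
  cases k with
  | zero => simp
  | succ k =>
    rw [derivation_pow_succ hD, Nat.cast_succ]
    ring

lemma wittBracket_pow_succ (hD : D h = 1) (k : ℕ) :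
    wittBracket D h (h ^ (k + 1)) = (k : R) • h ^ (k + 1) := by
  rw [wittBracket, mul_derivation_pow hD, hD, Nat.cast_smul_eq_nsmul, nsmul_eq_mul, Nat.cast_succ]
  ring

lemma wittBracket_mem (hf : f ∈ I) (hg : g ∈ I) : wittBracket D f g ∈ I :=
  sub_mem (I.mul_mem_right _ hf) (I.mul_mem_right _ hg)

lemma derivation_wittBracket_mem (hf : f ∈ I) (hg : g ∈ I) : D (wittBracket D f g) ∈ I := by
  have second_order : D (wittBracket D f g) = f * D (D g) - g * D (D f) := by
    simp only [wittBracket, map_sub, D.leibniz, smul_eq_mul]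
    ring
  rw [second_order]
  exact sub_mem (I.mul_mem_right _ hf) (I.mul_mem_right _ hg)

lemma wittBracket_mem_mul (hf : f ∈ J) (hDf : D f ∈ I) (hg : g ∈ J) (hDg : D g ∈ I) :
    wittBracket D f g ∈ J * I :=
  sub_mem (Ideal.mul_mem_mul hf hDg) (Ideal.mul_mem_mul hg hDf)

/-- A filtration of the Lie algebra `I D` that refines the powers of `I` and whose successive
quotients are abelian. The condition `D f ∈ I` only matters in degree one, since
`D (I ^ (k + 2)) ⊆ I`. -/
def solvableFiltration (D : Derivation R A A) (I : Ideal A) : ℕ → Submodule R A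
  | 0 => I.restrictScalars R
  | k + 1 => (I ^ (k + 1)).restrictScalars R ⊓ (I.restrictScalars R).comap (D : A →ₗ[R] A)

lemma solvableFiltration_le_pow (D : Derivation R A A) (k : ℕ) :
    solvableFiltration D I k ≤ (I ^ k).restrictScalars R := by
  cases k with
  | zero => simp
  | succ k => exact inf_le_left

lemma solvableFiltration_le (D : Derivation R A A) (k : ℕ) :
    solvableFiltration D I k ≤ I.restrictScalars R := by
  cases k with
  | zero => exact le_rfl
  | succ k => exact inf_le_left.trans (Ideal.pow_le_self k.succ_ne_zero)

lemma wittBracket_mem_solvableFiltration {k : ℕ} (hf : f ∈ solvableFiltration D I k)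
    (hg : g ∈ solvableFiltration D I k) : wittBracket D f g ∈ solvableFiltration D I (k + 1) := by
  refine ⟨?_, derivation_wittBracket_mem
    (solvableFiltration_le D k hf) (solvableFiltration_le D k hg)⟩
  cases k with
  | zero => simpa using wittBracket_mem hf hg
  | succ k => exact wittBracket_mem_mul hf.1 hf.2 hg.1 hg.2

end Ideal

section Trading

variable {K A : Type*} [Field K] [CommRing A] [Algebra K A] {D : Derivation K A A} {I : Ideal A}
  {W : Submodule K A} {h : A}

lemma pow_mul_mem_of_wittBracket_mem [NeZero (2 : K)] (hD : D h = 1) {m : ℕ} {g : A}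
    (h_left : wittBracket D (h ^ (m + 1)) g ∈ W)
    (h_right : wittBracket D (h ^ m) (h * g) ∈ W) : h ^ m * g ∈ W := by
  have difference : wittBracket D (h ^ m) (h * g) - wittBracket D (h ^ (m + 1)) g
      = (2 : K) • (h ^ m * g) := by
    rw [ofNat_smul_eq_nsmul, nsmul_eq_mul, Nat.cast_ofNat, wittBracket, wittBracket,
      derivation_pow_succ hD, D.leibniz, hD, smul_eq_mul, smul_eq_mul]
    linear_combination (-g) * mul_derivation_pow hD m
  rw [← W.smul_mem_iff (two_ne_zero : (2 : K) ≠ 0), ← difference]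
  exact sub_mem h_right h_left

lemma mul_pow_mem_of_forall_mul_pow_succ_mem (hI : h ∈ I) (hD : D h = 1)
    (hW : ∀ f ∈ W, f ∈ I → ∀ g ∈ I, wittBracket D f g ∈ W) {j m : ℕ}
    (hm : ((m + 1 : ℕ) : K) ≠ 0) (hj : ∀ y ∈ I ^ j, y * h ^ (m + 1) ∈ W) :
    ∀ x ∈ I ^ (j + 1), x * h ^ m ∈ W := by
  intro x hx
  rw [pow_succ] at hx
  refine Submodule.mul_induction_on hx (fun y hy g hg => ?_) fun a b ha hb => ?_
  · have expansion : ((m + 1 : ℕ) : K) • (y * g * h ^ m)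
        = y * D g * h ^ (m + 1) - g * D y * h ^ (m + 1) - wittBracket D (y * h ^ (m + 1)) g := by
      rw [Nat.cast_smul_eq_nsmul, nsmul_eq_mul, Nat.cast_succ, wittBracket, D.leibniz,
        derivation_pow_succ hD, smul_eq_mul, smul_eq_mul]
      ring
    have h_mem : y * h ^ (m + 1) ∈ I := I.mul_mem_left _ (I.pow_mem_of_mem hI _ m.succ_pos)
    rw [← W.smul_mem_iff hm, expansion]
    exact sub_mem (sub_mem (hj _ (Ideal.mul_mem_right _ _ hy))
      (hj _ (mul_derivation_mem_pow hy hg))) (hW _ (hj y hy) h_mem g hg)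
  · rw [add_mul]
    exact add_mem ha hb

lemma pow_add_mem_of_forall_mul_pow_mem [CharZero K] (hI : h ∈ I) (hD : D h = 1)
    (hW : ∀ f ∈ W, f ∈ I → ∀ g ∈ I, wittBracket D f g ∈ W) {j m : ℕ}
    (hj : ∀ y ∈ I ^ j, y * h ^ m ∈ W) : ∀ x ∈ I ^ (j + m), x ∈ W := by
  induction m generalizing j with
  | zero => simpa using hj
  | succ m ih =>
    rw [← add_assoc, add_right_comm]
    exact ih (mul_pow_mem_of_forall_mul_pow_succ_mem hI hD hW
      (Nat.cast_ne_zero.2 m.succ_ne_zero) hj)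

variable [NeZero (2 : K)]

lemma sq_mem_of_wittBracket_mem (hI : h ∈ I) (hD : D h = 1)
    (hW : ∀ f ∈ I, ∀ g ∈ I, wittBracket D f g ∈ W) : ∀ f ∈ I ^ 2, f ∈ W := by
  have mul_mem : ∀ g ∈ I ^ 1, g * h ^ 1 ∈ W := by
    intro g hg
    rw [pow_one] at hg
    rw [mul_comm]
    exact pow_mul_mem_of_wittBracket_mem hD (hW _ (I.pow_mem_of_mem hI _ two_pos) g hg)
      (hW _ (I.pow_mem_of_mem hI _ one_pos) _ (I.mul_mem_left h hg))
  simpa using mul_pow_mem_of_forall_mul_pow_succ_mem (j := 1) (m := 0) hI hD (fun f _ => hW f)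
    (by simp) mul_mem

lemma map_eq_smul_of_map_wittBracket_eq_zero {V : Type*} [AddCommGroup V] [Module K V]
    (φ : A →ₗ[K] V) (hI : h ∈ I) (hD : D h = 1)
    (hφ : ∀ f ∈ I, ∀ g ∈ I, φ (wittBracket D f g) = 0) {f : A} (hf : f ∈ I) {c : K}
    (hc : D f - algebraMap K A c ∈ I) : φ f = c • φ h := by
  have h_sq : φ (h * (D f - algebraMap K A c)) = 0 := by
    refine sq_mem_of_wittBracket_mem (W := LinearMap.ker φ) hI hD hφ _ ?_
    rw [pow_two]
    exact Ideal.mul_mem_mul hI hc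
  have decomposition : f = h * (D f - algebraMap K A c) + c • h - wittBracket D h f := by
    rw [wittBracket, hD, Algebra.smul_def]
    ring
  rw [decomposition, map_sub, map_add, h_sq, hφ h hI f hf, map_smul, zero_add, sub_zero]

end Trading

/-- The linear map `ρ` restricts to a representation on `U` of the Lie algebra `I D`; outside `I`
its values are arbitrary. -/
def IsWittRep {R A U : Type*} [CommRing R] [CommRing A] [Algebra R A] [AddCommGroup U] [Module R U]
    (D : Derivation R A A) (I : Ideal A) (ρ : A →ₗ[R] Module.End R U) : Prop :=
  ∀ f ∈ I, ∀ g ∈ I, ρ (wittBracket D f g) = ⁅ρ f, ρ g⁆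

namespace IsWittRep

section Image

variable {R A U : Type*} [CommRing R] [CommRing A] [Algebra R A] [AddCommGroup U] [Module R U]
  {D : Derivation R A A} {I : Ideal A} {ρ : A →ₗ[R] Module.End R U}

/-- The image of the Lie algebra `I D` under a representation, as a Lie algebra of operators. -/
def image (hρ : IsWittRep D I ρ) : LieSubalgebra R (Module.End R U) where
  __ := (I.restrictScalars R).map ρ
  lie_mem' := by
    rintro _ _ ⟨f, hf, rfl⟩ ⟨g, hg, rfl⟩
    exact ⟨wittBracket D f g, wittBracket_mem hf hg, hρ f hf g hg⟩

lemma isSolvable_image (hρ : IsWittRep D I ρ) {N : ℕ} (hN : ∀ f ∈ I ^ N, ρ f = 0) :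
    LieAlgebra.IsSolvable hρ.image := by
  refine isSolvable_of_lie_mem_succ (R := R) (N := N)
    (fun k => ((solvableFiltration D I k).map ρ).comap hρ.image.toSubmodule.subtype) ?_ ?_ ?_
  · exact Submodule.comap_subtype_eq_top.2 le_rfl
  · rintro k ⟨_, _⟩ ⟨f, hf, rfl⟩ ⟨_, _⟩ ⟨g, hg, rfl⟩
    exact ⟨wittBracket D f g, wittBracket_mem_solvableFiltration hf hg,
      hρ f (solvableFiltration_le D k hf) g (solvableFiltration_le D k hg)⟩
  · rw [eq_bot_iff]
    rintro x ⟨f, hf, hfx⟩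
    rw [hN f (solvableFiltration_le_pow D N hf)] at hfx
    exact Subtype.ext hfx.symm

end Image

section Rank

variable {K A U : Type*} [Field K] [NeZero (2 : K)] [CommRing A] [Algebra K A] [AddCommGroup U]
  [Module K U] {D : Derivation K A A} {I : Ideal A} {ρ : A →ₗ[K] Module.End K U}

lemma exists_map_eq_smul_one_of_finrank_eq_one (hρ : IsWittRep D I ρ)
    (hU : Module.finrank K U = 1) {h : A} (hI : h ∈ I) (hD : D h = 1) :
    ∃ α : K, ∀ f ∈ I, ∀ c : K, D f - algebraMap K A c ∈ I → ρ f = (α * c) • 1 := by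
  have scalar (T : Module.End K U) : ∃ c : K, T = c • 1 :=
    (T.existsUnique_eq_smul_id_of_finrank_eq_one hU).exists
  have bracket_eq_zero : ∀ f ∈ I, ∀ g ∈ I, ρ (wittBracket D f g) = 0 := by
    intro f hf g hg
    obtain ⟨a, ha⟩ := scalar (ρ f)
    rw [hρ f hf g hg, ha, smul_lie, Ring.lie_def, one_mul, mul_one, sub_self, smul_zero]
  obtain ⟨α, hα⟩ := scalar (ρ h)
  refine ⟨α, fun f hf c hc => ?_⟩
  rw [map_eq_smul_of_map_wittBracket_eq_zero ρ hI hD bracket_eq_zero hf hc, hα, smul_smul, mul_comm]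

end Rank

variable {K A U : Type*} [Field K] [CharZero K] [CommRing A] [Algebra K A] [AddCommGroup U]
  [Module K U] [FiniteDimensional K U] {D : Derivation K A A} {I : Ideal A}
  {ρ : A →ₗ[K] Module.End K U}

lemma exists_forall_map_pow_eq_zero (hρ : IsWittRep D I ρ) {h : A} (hI : h ∈ I) (hD : D h = 1) :
    ∃ N, ∀ m > N, ρ (h ^ m) = 0 := by
  have ad_pow (k : ℕ) :
      LieAlgebra.ad K (Module.End K U) (ρ h) (ρ (h ^ (k + 1))) = (k : K) • ρ (h ^ (k + 1)) := by
    rw [LieAlgebra.ad_apply, ← hρ h hI _ (I.pow_mem_of_mem hI _ k.succ_pos),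
      wittBracket_pow_succ hD, map_smul]
  have finite_nonzero : {k : ℕ | ρ (h ^ (k + 1)) ≠ 0}.Finite :=
    ((Module.End.finite_hasEigenvalue _).preimage Nat.cast_injective.injOn).subset fun k hk =>
      Module.End.hasEigenvalue_of_hasEigenvector ⟨Module.End.mem_eigenspace_iff.2 (ad_pow k), hk⟩
  obtain ⟨M, hM⟩ := finite_nonzero.bddAbove
  refine ⟨M + 1, fun m hm => ?_⟩
  obtain ⟨k, rfl⟩ := Nat.exists_eq_add_of_lt hm
  by_contra hne
  have := hM hne
  omega

lemma exists_forall_mem_pow_map_eq_zero (hρ : IsWittRep D I ρ) {h : A} (hI : h ∈ I)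
    (hD : D h = 1) : ∃ N, ∀ f ∈ I ^ N, ρ f = 0 := by
  obtain ⟨N, hN⟩ := hρ.exists_forall_map_pow_eq_zero hI hD
  have bracket_mem_ker : ∀ f ∈ LinearMap.ker ρ, f ∈ I → ∀ g ∈ I,
      wittBracket D f g ∈ LinearMap.ker ρ := by
    intro f hf hfI g hg
    rw [LinearMap.mem_ker] at hf ⊢
    rw [hρ f hfI g hg, hf, zero_lie]
  have pow_bracket_mem_ker (m : ℕ) (hm : N < m) : ∀ g ∈ I,
      wittBracket D (h ^ m) g ∈ LinearMap.ker ρ :=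
    bracket_mem_ker _ (hN m hm) (I.pow_mem_of_mem hI m (by omega))
  refine ⟨1 + (N + 1), pow_add_mem_of_forall_mul_pow_mem hI hD bracket_mem_ker fun g hg => ?_⟩
  rw [pow_one] at hg
  rw [mul_comm]
  exact pow_mul_mem_of_wittBracket_mem hD (pow_bracket_mem_ker _ (by omega) g hg)
    (pow_bracket_mem_ker _ (by omega) _ (I.mul_mem_left h hg))

variable [IsAlgClosed K] [Nontrivial U]

lemma exists_common_eigenvector (hρ : IsWittRep D I ρ) {N : ℕ} (hN : ∀ f ∈ I ^ N, ρ f = 0) :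
    ∃ v : U, v ≠ 0 ∧ ∀ f ∈ I, ∃ c : K, ρ f v = c • v := by
  have := hρ.isSolvable_image hN
  obtain ⟨χ, hχ⟩ := LieModule.exists_nontrivial_weightSpace_of_isSolvable K hρ.image U
  obtain ⟨⟨v, hv⟩, hv_ne⟩ := exists_ne (0 : LieModule.weightSpace U χ)
  rw [LieModule.mem_weightSpace] at hv
  exact ⟨v, by simpa using hv_ne, fun f hf => ⟨_, hv ⟨ρ f, f, hf, rfl⟩⟩⟩

lemma finrank_eq_one_of_simple (hρ : IsWittRep D I ρ) {N : ℕ} (hN : ∀ f ∈ I ^ N, ρ f = 0)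
    (h_simple : ∀ S : Submodule K U, (∀ f ∈ I, ∀ u ∈ S, ρ f u ∈ S) → S = ⊥ ∨ S = ⊤) :
    Module.finrank K U = 1 := by
  obtain ⟨v, hv_ne, hv⟩ := hρ.exists_common_eigenvector hN
  have span_invariant : ∀ f ∈ I, ∀ u ∈ K ∙ v, ρ f u ∈ K ∙ v := by
    intro f hf u hu
    obtain ⟨a, rfl⟩ := Submodule.mem_span_singleton.1 hu
    obtain ⟨c, hc⟩ := hv f hf
    rw [map_smul, hc]
    exact Submodule.smul_mem _ _ (Submodule.smul_mem _ _ (Submodule.mem_span_singleton_self v))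
  have span_ne_bot : K ∙ v ≠ ⊥ := by simpa using hv_ne
  exact (finrank_eq_one_iff_of_nonzero v hv_ne).2
    ((h_simple _ span_invariant).resolve_left span_ne_bot)

end IsWittRep

section Polynomial

variable {R σ : Type*} [CommRing R]

/-- The derivation `∂_μ` of `R[xᵢ | i ∈ σ]` with `∂_μ xᵢ = μ i`. The set `σ` of variables may be
infinite. -/
noncomputable def constDerivation (μ : σ → R) :
    Derivation R (MvPolynomial σ R) (MvPolynomial σ R) :=
  mkDerivation R fun i => C (μ i)

lemma constDerivation_X (μ : σ → R) (i : σ) : constDerivation μ (X i) = C (μ i) :=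
  mkDerivation_X R _ i

lemma constDerivation_eq_sum_pderiv (μ : σ → R) {s : Finset σ} {f : MvPolynomial σ R}
    (hs : f.vars ⊆ s) : constDerivation μ f = ∑ i ∈ s, C (μ i) * pderiv i f := by
  have h_sum (g : MvPolynomial σ R) :
      (∑ i ∈ s, C (σ := σ) (μ i) • pderiv i : Derivation R (MvPolynomial σ R) (MvPolynomial σ R)) g
        = ∑ i ∈ s, C (μ i) * pderiv i g := by
    rw [← Derivation.coeFnAddMonoidHom_apply, map_sum]
    simp [Derivation.coeFnAddMonoidHom]
  rw [← h_sum]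
  refine derivation_eq_of_forall_mem_vars fun j hj => ?_
  rw [h_sum, constDerivation_X, Finset.sum_eq_single_of_mem j (hs hj)]
  · rw [pderiv_X_self, mul_one]
  · intro i _ hij
    rw [pderiv_X_of_ne hij.symm, mul_zero]

/-- The sum is finite even if `σ` is not, as only the variables of `f` contribute. -/
lemma constantCoeff_constDerivation (μ : σ → R) (f : MvPolynomial σ R) :
    constantCoeff (constDerivation μ f) = ∑ᶠ i, μ i * coeff (Finsupp.single i 1) f := by
  have coeff_eq (i : σ) :
      constantCoeff (C (μ i) * pderiv i f) = μ i * coeff (Finsupp.single i 1) f := by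
    simp [constantCoeff_eq, coeff_pderiv]
  rw [constDerivation_eq_sum_pderiv μ subset_rfl, map_sum, finsum_eq_sum_of_support_subset]
  · exact Finset.sum_congr rfl fun i _ => coeff_eq i
  · intro i hi
    by_contra h_vars
    rw [Function.mem_support, ← coeff_eq, pderiv_eq_zero_of_notMem_vars h_vars] at hi
    simp at hi

lemma sub_constantCoeff_mem_ker (f : MvPolynomial σ R) :
    f - algebraMap R _ (constantCoeff f) ∈
      RingHom.ker (constantCoeff : MvPolynomial σ R →+* R) := by
  simp [RingHom.mem_ker, algebraMap_eq]

lemma exists_constDerivation_eq_one {K : Type*} [Field K] {μ : σ → K} (hμ : μ ≠ 0) :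
    ∃ h : MvPolynomial σ K, constantCoeff h = 0 ∧ constDerivation μ h = 1 := by
  obtain ⟨i, hi : μ i ≠ 0⟩ := Function.ne_iff.1 hμ
  refine ⟨(μ i)⁻¹ • X i, by simp [smul_eq_C_mul], ?_⟩
  rw [Derivation.map_smul, constDerivation_X, smul_eq_C_mul, ← C_mul, inv_mul_cancel₀ hi, C_1]

end Polynomial

lemma lbr_eq_wittBracket (n : ℕ) (μ : Fin n → ℂ) : lbr n μ = wittBracket (constDerivation μ) := by
  have dmu_eq (f : MvPolynomial (Fin n) ℂ) : dmu n μ f = constDerivation μ f :=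
    (constDerivation_eq_sum_pderiv μ (Finset.subset_univ _)).symm
  ext f g : 2
  rw [lbr, wittBracket, dmu_eq, dmu_eq]

theorem stmt15_general {K σ : Type*} [Field K] [IsAlgClosed K] [CharZero K] (μ : σ → K)
    (hμ : Nonempty σ → μ ≠ 0) :
    (∀ (U : Type*) (_ : AddCommGroup U) (_ : Module K U) (_ : FiniteDimensional K U)
      (ρ : MvPolynomial σ K →ₗ[K] Module.End K U),
      (∀ f g : MvPolynomial σ K, constantCoeff f = 0 → constantCoeff g = 0 →
        ρ (wittBracket (constDerivation μ) f g) = ρ f * ρ g - ρ g * ρ f) →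
      Nontrivial U →
      (∀ S : Submodule K U,
        (∀ f : MvPolynomial σ K, constantCoeff f = 0 → ∀ u ∈ S, ρ f u ∈ S) → S = ⊥ ∨ S = ⊤) →
      (Module.finrank K U = 1 ∧
        ∃ α : K,
          (∀ i : σ, ρ (X i) = (α * μ i) • (1 : Module.End K U)) ∧
          (∀ f : MvPolynomial σ K, constantCoeff f = 0 →
            (∀ i : σ, coeff (Finsupp.single i 1) f = 0) → ρ f = 0))) ∧
    (∀ f g : MvPolynomial σ K, constantCoeff f = 0 → constantCoeff g = 0 →
      ∑ᶠ i, μ i * coeff (Finsupp.single i 1) (wittBracket (constDerivation μ) f g) = 0) := by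
  refine ⟨fun U _ _ _ ρ h_rep _ h_simple => ?_, fun f g hf hg => ?_⟩
  · have hρ : IsWittRep (constDerivation μ) (RingHom.ker constantCoeff) ρ :=
      fun f hf g hg => h_rep f g hf hg
    rcases isEmpty_or_nonempty σ with _ | h_nonempty
    · have map_eq_zero (f : MvPolynomial σ K) (hf : constantCoeff f = 0) : ρ f = 0 := by
        rw [eq_C_of_isEmpty f, ← constantCoeff_eq, hf, C_0, map_zero]
      exact ⟨hρ.finrank_eq_one_of_simple (N := 1) (by simpa using map_eq_zero) h_simple, 0,
        isEmptyElim, fun f hf _ => map_eq_zero f hf⟩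
    · obtain ⟨h, h_mem, hD⟩ := exists_constDerivation_eq_one (hμ h_nonempty)
      obtain ⟨N, hN⟩ := hρ.exists_forall_mem_pow_map_eq_zero h_mem hD
      have hU := hρ.finrank_eq_one_of_simple hN h_simple
      obtain ⟨α, hα⟩ := hρ.exists_map_eq_smul_one_of_finrank_eq_one hU h_mem hD
      refine ⟨hU, α, fun i => ?_, fun f hf h_lin => ?_⟩
      · exact hα (X i) (constantCoeff_X K i) (μ i) (by simp [constDerivation_X, algebraMap_eq])
      · have := hα f hf _ (sub_constantCoeff_mem_ker _)
        simpa [constantCoeff_constDerivation, h_lin] using this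
  · rw [← constantCoeff_constDerivation]
    exact derivation_wittBracket_mem (I := RingHom.ker (constantCoeff (R := K) (σ := σ))) hf hg

/-- Every finite-dimensional simple module over `𝓛₊` is one-dimensional, and the
one-dimensional representations are exactly the maps `ρ_α` (`α ∈ ℂ`) with
`ρ_α(xᵢ∂_μ) = αμᵢ` and `ρ_α(𝓛_j) = 0` for `j ≥ 1`.  A representation is a linear
map `ρ : 𝓛₊ → End U` turning brackets into commutators (stated for all `f, g`
with zero constant term); simplicity means `U ≠ 0` has no proper nonzero
`ρ(𝓛₊)`-invariant subspaces.  The converse direction asserts that each `ρ_α`,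
i.e. `f ↦ α Σᵢ μᵢ·(coefficient of xᵢ in f)`, kills all brackets and hence is a
one-dimensional representation. -/
theorem stmt15 (n : ℕ) (μ : Fin n → ℂ)
    (hgen : ∀ r : Fin n → ℤ, r ≠ 0 → (∑ i, μ i * (r i : ℂ)) ≠ 0) :
    (∀ (U : Type) (_ : AddCommGroup U) (_ : Module ℂ U) (_ : FiniteDimensional ℂ U)
      (ρ : MvPolynomial (Fin n) ℂ →ₗ[ℂ] Module.End ℂ U),
      (∀ f g : MvPolynomial (Fin n) ℂ, constantCoeff f = 0 → constantCoeff g = 0 →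
        ρ (lbr n μ f g) = ρ f * ρ g - ρ g * ρ f) →
      Nontrivial U →
      (∀ S : Submodule ℂ U,
        (∀ f : MvPolynomial (Fin n) ℂ, constantCoeff f = 0 → ∀ u ∈ S, ρ f u ∈ S) →
        S = ⊥ ∨ S = ⊤) →
      (Module.finrank ℂ U = 1 ∧
        ∃ α : ℂ,
          (∀ i : Fin n, ρ (X i) = (α * μ i) • (1 : Module.End ℂ U)) ∧
          (∀ f : MvPolynomial (Fin n) ℂ, constantCoeff f = 0 →
            (∀ i : Fin n, coeff (Finsupp.single i 1) f = 0) → ρ f = 0))) ∧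
    (∀ (_ : ℂ) (f g : MvPolynomial (Fin n) ℂ), constantCoeff f = 0 → constantCoeff g = 0 →
      ∑ i, μ i * coeff (Finsupp.single i 1) (lbr n μ f g) = 0) := by
  have general := stmt15_general μ fun ⟨i⟩ hμ => hgen (Pi.single i 1) (by simp) (by simp [hμ])
  simpa only [lbr_eq_wittBracket, finsum_eq_sum_of_fintype, forall_const] using general
end

section
/- Let M be a cuspidal W_μ-module. If there exists r ∈ ℕ such that Ω^{(r,h)}_{q,p} annihilates M for all h ∈ Γ_μ and all q,p ∈ ℤh, then Ω^{(4r,h)}_{k,s} annihilates M for all h, k ∈ Γ_μ and all s ∈ ℤh. -/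
/-- The differentiator `Ω^{(r,h)}_{k,s} = Σ_{i=0}^{r} (−1)^i C(r,i) e_{k−ih} e_{s+ih}`
acting on a `W_μ`-module `M`, where `E k` is the action of the basis element
`e_k` of `W_μ`. -/
noncomputable def diffE (Γ : AddSubgroup ℂ) (M : Type) [AddCommGroup M] [Module ℂ M]
    (E : Γ → Module.End ℂ M) (r : ℕ) (h k s : Γ) : Module.End ℂ M :=
  ∑ i ∈ Finset.range (r + 1),
    ((-1 : ℂ) ^ i * (r.choose i : ℂ)) • (E (k - i • h) * E (s + i • h))

/-!
Taking brackets with `e_x` shifts the indices of a differentiator: `⁅e_x, Ω^{(r,h)}_{q,p}⁆` is a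
combination of `Ω^{(r,h)}_{x+q,p}` and `Ω^{(r,h)}_{q,x+p}`, up to differentiators of order `r - 1`.
When `q, p ∈ ℤh` this bracket vanishes by hypothesis. Let `q` and `p` move along `ℤh` and adjust
`x` so that `k = x + q + p - s` is fixed, with `p = s + ah` and `q = bh`. The vanishing then reads
`P a + Q b + b • X a + a • Y b = 0` with `X a = 2h Ω^{(r,h)}_{k-ah,s+ah}`, so `X` is affine in `a`.
Its second difference is `2h Ω^{(r+2,h)}_{k,s}`, which settles `r ≥ 2` as then `r + 2 ≤ 2r`.
For `r ≤ 1` the hypothesis already gives `⁅e_m, e_0⁆ = Ω^{(1,m)}_{m,0} = 0`, so `e_m` acts by zero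
for every `m ≠ 0`, and `Ω^{(n,h)}_{k,s}` can only be nonzero when `k ∈ ℤh`.
-/

section Differentiator

variable {Γ A : Type*} [AddCommGroup Γ] [Ring A] {E : Γ → A} {r n : ℕ} {h k s : Γ}

/-- The differentiator `Ω^{(r,h)}_{k,s}` of a family `E` in an arbitrary ring; it has integer
coefficients, so no base field is involved. -/
def differentiator (E : Γ → A) (r : ℕ) (h k s : Γ) : A :=
  ∑ i ∈ Finset.range (r + 1), ((-1 : ℤ) ^ i * r.choose i) • (E (k - i • h) * E (s + i • h))

theorem diffE_eq_differentiator (Γ : AddSubgroup ℂ) (M : Type) [AddCommGroup M] [Module ℂ M]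
    (E : Γ → Module.End ℂ M) (r : ℕ) (h k s : Γ) :
    diffE Γ M E r h k s = differentiator E r h k s :=
  Finset.sum_congr rfl fun i _ => by
    rw [← Int.cast_smul_eq_zsmul ℂ]
    push_cast
    rfl

theorem differentiator_eq_fwdDiff_iter (E : Γ → A) (r : ℕ) (h k s : Γ) :
    differentiator E r h k s =
      (-1 : ℤ) ^ r • (fwdDiff (-h, h))^[r] (fun p : Γ × Γ => E p.1 * E p.2) (k, s) := by
  rw [fwdDiff_iter_eq_sum_shift, Finset.smul_sum]
  refine Finset.sum_congr rfl fun i hi => ?_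
  have hsign : (-1 : ℤ) ^ r * (-1) ^ (r - i) = (-1) ^ i := by
    obtain ⟨j, rfl⟩ := Nat.exists_eq_add_of_le (Finset.mem_range_succ_iff.mp hi)
    rw [Nat.add_sub_cancel_left, pow_add, mul_assoc, ← mul_pow]
    simp
  rw [smul_smul, ← mul_assoc, hsign]
  simp [sub_eq_add_neg]

theorem differentiator_succ (E : Γ → A) (r : ℕ) (h k s : Γ) :
    differentiator E (r + 1) h k s =
      differentiator E r h k s - differentiator E r h (k - h) (s + h) := by
  simp only [differentiator_eq_fwdDiff_iter, Function.iterate_succ_apply', fwdDiff, Prod.mk_add_mk,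
    ← sub_eq_add_neg, pow_succ, mul_neg_one, neg_smul, smul_sub, neg_sub_neg]

theorem differentiator_zero (E : Γ → A) (h k s : Γ) :
    differentiator E 0 h k s = E k * E s := by
  simp [differentiator]

theorem differentiator_eq_zero_of_le (hrn : r ≤ n)
    (hann : ∀ i : ℕ, differentiator E r h (k - i • h) (s + i • h) = 0) :
    differentiator E n h k s = 0 := by
  induction n, hrn using Nat.le_induction generalizing k s with
  | base => simpa using hann 0
  | succ n _ ih =>
    have hshift (i : ℕ) : differentiator E r h (k - h - i • h) (s + h + i • h) = 0 := by
      simpa only [succ_nsmul', ← sub_sub, ← add_assoc] using hann (i + 1)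
    rw [differentiator_succ, ih hann, ih hshift, sub_zero]

theorem differentiator_eq_zero_of_forall_ne_zero (hE : ∀ m ≠ 0, E m = 0)
    (hk : ∀ i : ℕ, k ≠ i • h) : differentiator E n h k s = 0 :=
  Finset.sum_eq_zero fun i _ => by rw [hE _ (sub_ne_zero.mpr (hk i)), zero_mul, smul_zero]

end Differentiator

theorem second_difference_eq_zero_of_separated {G : Type*} [AddCommGroup G] {P Q X Y : ℕ → G}
    (hPQ : ∀ a b : ℕ, P a + Q b + b • X a + a • Y b = 0) (a : ℕ) :
    X a - X (a + 1) - (X (a + 1) - X (a + 2)) = 0 := by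
  have hX (a : ℕ) : X a = Q 0 - Q 1 - a • (Y 1 - Y 0) := by
    linear_combination (norm := module) hPQ a 1 - hPQ a 0
  rw [hX a, hX (a + 1), hX (a + 2)]
  module

section Solenoidal

variable {R Γ A : Type*} [CommRing R] [AddCommGroup Γ] [Ring A] [Algebra R A]
  {φ : Γ →+ R} {E : Γ → A}

/-- `E` satisfies the relations of the solenoidal Lie algebra, so that `e_k ↦ E k` is a
representation in the associative algebra `A`. The inclusion `Γ_μ ⊆ ℂ` giving the structure
constants `m - k` is replaced by an additive map `φ`. -/
def IsSolenoidal (φ : Γ →+ R) (E : Γ → A) : Prop :=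
  ∀ k m : Γ, ⁅E k, E m⁆ = (φ m - φ k) • E (k + m)

namespace IsSolenoidal

theorem lie_mul (hE : IsSolenoidal φ E) (x q p : Γ) :
    ⁅E x, E q * E p⁆ =
      (φ q - φ x) • (E (x + q) * E p) + (φ p - φ x) • (E q * E (x + p)) := by
  rw [← smul_mul_assoc, ← mul_smul_comm, ← hE, ← hE]
  simp only [Ring.lie_def]
  noncomm_ring

/-- For `r = 0` the differentiators of truncated order `r - 1` occur with coefficient zero. -/
theorem lie_differentiator (hE : IsSolenoidal φ E) (r : ℕ) (h x q p : Γ) :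
    ⁅E x, differentiator E r h q p⁆ =
      (φ q - φ x) • differentiator E r h (x + q) p
        + (φ p - φ x) • differentiator E r h q (x + p)
        + (r * φ h) • (differentiator E (r - 1) h (x + q - h) (p + h)
          - differentiator E (r - 1) h (q - h) (x + p + h)) := by
  induction r generalizing q p with
  | zero => simp [differentiator_zero, hE.lie_mul]
  | succ r ih =>
    have hpred (k s : Γ) : (r : R) • differentiator E r h k s =
        (r : R) • (differentiator E (r - 1) h k s
          - differentiator E (r - 1) h (k - h) (s + h)) := by
      cases r with
      | zero => simp
      | succ r => rw [differentiator_succ, Nat.add_sub_cancel]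
    have hlie : ⁅E x, differentiator E (r + 1) h q p⁆ =
        ⁅E x, differentiator E r h q p⁆ - ⁅E x, differentiator E r h (q - h) (p + h)⁆ := by
      rw [differentiator_succ]
      simp only [Ring.lie_def, mul_sub, sub_mul]
      abel
    rw [hlie, ih, ih, differentiator_succ, differentiator_succ, Nat.add_sub_cancel]
    simp only [map_sub, map_add, ← add_sub_assoc, ← add_assoc]
    linear_combination (norm := module)
      -φ h • hpred (x + q - h) (p + h) + φ h • hpred (q - h) (x + p + h)

theorem two_mul_smul_differentiator_add_two (hE : IsSolenoidal φ E) {r : ℕ} {h : Γ}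
    (hann : ∀ a b : ℤ, differentiator E r h (a • h) (b • h) = 0) (k : Γ) (c : ℤ) :
    (2 * φ h) • differentiator E (r + 2) h k (c • h) = 0 := by
  let s : Γ := c • h
  let P (a : ℕ) : A := (a * φ h - φ k) • differentiator E r h (k - a • h) (s + a • h)
    + (r * φ h) • differentiator E (r - 1) h (k - a • h - h) (s + a • h + h)
  let Q (b : ℕ) : A := (φ s + b * φ h - φ k) • differentiator E r h (b • h) (k + s - b • h)
    - (r * φ h) • differentiator E (r - 1) h (b • h - h) (k + s - b • h + h)
  let X (a : ℕ) : A := (2 * φ h) • differentiator E r h (k - a • h) (s + a • h)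
  let Y (b : ℕ) : A := (2 * φ h) • differentiator E r h (b • h) (k + s - b • h)
  have hPQ (a b : ℕ) : P a + Q b + b • X a + a • Y b = 0 := by
    have hzero : differentiator E r h (b • h) (s + a • h) = 0 := by
      simpa only [s, natCast_zsmul, add_smul] using hann b (c + a)
    have hbr := hE.lie_differentiator r h (k - a • h - b • h) (b • h) (s + a • h)
    have hleft : k - a • h - b • h + b • h = k - a • h := by abel
    have hright : k - a • h - b • h + (s + a • h) = k + s - b • h := by abel
    rw [hzero, Ring.lie_def, mul_zero, zero_mul, sub_self, hleft, hright] at hbr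
    simp only [map_sub, map_add, map_nsmul] at hbr
    simp only [P, Q, X, Y]
    linear_combination (norm := module) -hbr
  have hsecond := second_difference_eq_zero_of_separated hPQ 0
  simpa [X, s, differentiator_succ, smul_sub, two_nsmul, sub_sub, add_assoc] using hsecond

variable [IsDomain R] [Module.IsTorsionFree R A]

theorem differentiator_add_two_eq_zero [NeZero (2 : R)] (hE : IsSolenoidal φ E)
    (hφ : Function.Injective φ) {r : ℕ} {h : Γ}
    (hann : ∀ a b : ℤ, differentiator E r h (a • h) (b • h) = 0) (k : Γ) (c : ℤ) :
    differentiator E (r + 2) h k (c • h) = 0 := by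
  obtain rfl | hh := eq_or_ne h 0
  · simp [differentiator_succ]
  · have htwo : 2 * φ h ≠ 0 := mul_ne_zero two_ne_zero ((map_ne_zero_iff φ hφ).mpr hh)
    exact (smul_eq_zero_iff_right htwo).mp (hE.two_mul_smul_differentiator_add_two hann k c)

theorem eq_zero_of_differentiator_one_eq_zero (hE : IsSolenoidal φ E)
    (hφ : Function.Injective φ) {m : Γ} (hm : m ≠ 0) (hann : differentiator E 1 m m 0 = 0) :
    E m = 0 := by
  have hlie : ⁅E m, E 0⁆ = 0 := by
    simpa [differentiator_succ, differentiator_zero, Ring.lie_def] using hann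
  rw [hE, add_zero, map_zero, zero_sub] at hlie
  exact (smul_eq_zero_iff_right (neg_ne_zero.mpr ((map_ne_zero_iff φ hφ).mpr hm))).mp hlie

theorem differentiator_eq_zero_of_le_one (hE : IsSolenoidal φ E)
    (hφ : Function.Injective φ) {r n : ℕ} (hr : r ≤ 1) (hrn : r ≤ n)
    (hann : ∀ (h : Γ) (a b : ℤ), differentiator E r h (a • h) (b • h) = 0)
    (h k : Γ) (c : ℤ) : differentiator E n h k (c • h) = 0 := by
  have hmono {n : ℕ} (hrn : r ≤ n) (h : Γ) (a b : ℤ) :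
      differentiator E n h (a • h) (b • h) = 0 :=
    differentiator_eq_zero_of_le hrn fun i => by
      simpa only [sub_smul, add_smul, natCast_zsmul] using hann h (a - i) (b + i)
  have hzero (m : Γ) (hm : m ≠ 0) : E m = 0 :=
    hE.eq_zero_of_differentiator_one_eq_zero hφ hm (by simpa using hmono hr m 1 0)
  by_cases hk : ∃ i : ℕ, k = i • h
  · obtain ⟨i, rfl⟩ := hk
    simpa only [natCast_zsmul] using hmono hrn h i c
  · exact differentiator_eq_zero_of_forall_ne_zero hzero (not_exists.mp hk)

end IsSolenoidal

theorem stmt18_general [IsDomain R] [NeZero (2 : R)] [Module.IsTorsionFree R A]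
    (hφ : Function.Injective φ) (hE : IsSolenoidal φ E) {r n : ℕ}
    (hn : min (2 * r) (r + 2) ≤ n)
    (hann : ∀ (h : Γ) (a b : ℤ), differentiator E r h (a • h) (b • h) = 0)
    (h k : Γ) (c : ℤ) : differentiator E n h k (c • h) = 0 := by
  obtain hr | hr := le_or_gt r 1
  · exact hE.differentiator_eq_zero_of_le_one hφ hr (by omega) hann h k c
  · refine differentiator_eq_zero_of_le (show r + 2 ≤ n by omega) fun i => ?_
    simpa only [add_smul, natCast_zsmul] using
      hE.differentiator_add_two_eq_zero hφ (hann h) (k - i • h) (c + i)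

end Solenoidal

/-- Let `M` be a cuspidal `W_μ`-module (a weight module with uniformly bounded
weight multiplicities, weight spaces being eigenspaces of the action `E 0` of
`d_μ = e_0`).  If there is `r ∈ ℕ` such that `Ω^{(r,h)}_{q,p}` annihilates `M`
for all `h ∈ Γ_μ` and all `q, p ∈ ℤh`, then `Ω^{(4r,h)}_{k,s}` annihilates `M`
for all `h, k ∈ Γ_μ` and all `s ∈ ℤh`. -/
theorem stmt18 (Γ : AddSubgroup ℂ) (M : Type) [AddCommGroup M] [Module ℂ M]
    (E : Γ → Module.End ℂ M)
    (hcomm : ∀ k m : Γ, E k * E m - E m * E k = ((m : ℂ) - (k : ℂ)) • E (k + m))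
    (hwt : (⨆ lam : ℂ, LinearMap.ker (E 0 - lam • (1 : Module.End ℂ M))) = ⊤)
    (hcusp : ∃ C : ℕ, ∀ lam : ℂ,
      Module.finrank ℂ (LinearMap.ker (E 0 - lam • (1 : Module.End ℂ M))) ≤ C)
    (r : ℕ)
    (hann : ∀ h q p : Γ, (∃ z : ℤ, q = z • h) → (∃ z : ℤ, p = z • h) →
      diffE Γ M E r h q p = 0) :
    ∀ h k s : Γ, (∃ z : ℤ, s = z • h) → diffE Γ M E (4 * r) h k s = 0 := by
  simp only [diffE_eq_differentiator] at hann ⊢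
  rintro h k _ ⟨c, rfl⟩
  exact stmt18_general (φ := Γ.subtype) Γ.subtype_injective hcomm (by omega)
    (fun h a b => hann h _ _ ⟨a, rfl⟩ ⟨b, rfl⟩) h k c
end
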